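/- arXiv:2508.12446 — 7 statements merged into one kernel-verified Lean document; each statement's English description precedes it below -/
import Mathlib

section
/- Let p ≥ 2 and let T = T_1 × ⋯ × T_p ⊂ ℝ^p where each T_j ⊂ ℝ is compact with positive Lebesgue measure. Let g be a measurable probability density with g(x) > 0 for all x ∈ T and ∫_T g = 1. Suppose two parameter tuples (π, α, u_1, …, u_p) and (π̃, α̃, ũ_1, …, ũ_p), with π, π̃ ∈ (0,1), α, α̃ ∈ ℝ, and bounded measurable u_j, ũ_j : T_j → ℝ satisfying the centering constraints ∫_{T_j} u_j(x_j) dx_j = 0 and ∫_{T_j} ũ_j(x_j) dx_j = 0, are such that h(x) := g(x)·exp(−α − Σ_{j=1}^p u_j(x_j)) and h̃(x) := g(x)·exp(−α̃ − Σ_{j=1}^p ũ_j(x_j)) are both probability densities on T (i.e., ∫_T h = ∫_T h̃ = 1). If π g(x) + (1−π) h(x) = π̃ g(x) + (1−π̃) h̃(x) for Lebesgue-almost every x ∈ T, and there exist two distinct indices j ≠ k such that u_j is not almost-everywhere constant on T_j and u_k is not almost-everywhere constant on T_k, then π = π̃, α = α̃, and u_j = ũ_j Lebesgue-almost everywhere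 on T_j for every j = 1, …, p. -/
open MeasureTheory

/-!
Dividing by `g`, the two mixtures agree iff `π + (1 - π) e^{-α} ∏ᵢ e^{-uᵢ(xᵢ)}` equals its primed
counterpart almost everywhere. Freezing all coordinates except `j` and `k`, this says that the
constant `π - π'` is a difference of two product functions `F'(s) G'(t) - F(s) G(t)`. When `F` and
`G` are both non-constant, eliminating `F'` between two values of `t` forces `π = π'`.
Taking logarithms, the additive predictors then agree, and freezing all coordinates but one shows
that `uᵢ - uᵢ'` is almost everywhere constant, hence zero by the centering constraint.
-/

section Elimination

open Filter

theorem eventuallyConst_of_injective_comp {X Y Z : Type*} {l : Filter X} {f : X → Y} {φ : Y → Z}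
    (hφ : φ.Injective) (h : EventuallyConst (φ ∘ f) l) : EventuallyConst f l :=
  have ⟨t, ht, ht_sub⟩ := h
  ⟨φ ⁻¹' t, ht, ht_sub.preimage hφ⟩

theorem eq_of_eventually_add_mul_eq {X Y K : Type*} [Field K] {l : Filter X} {m : Filter Y}
    {F F' : X → K} {G G' : Y → K} {c c' : K}
    (hF : ¬ EventuallyConst F l) (hG : ¬ EventuallyConst G m)
    (h : ∀ᶠ t in m, ∀ᶠ s in l, c + F s * G t = c' + F' s * G' t) :
    c = c' := by
  have : l.NeBot := ⟨by rintro rfl; exact hF .bot⟩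
  have : m.NeBot := ⟨by rintro rfl; exact hG .bot⟩
  obtain ⟨t₁, h₁⟩ := h.exists
  have hG_freq : ∃ᶠ t in m, G t ≠ G t₁ := fun hconst ↦
    hG (eventuallyConst_iff_exists_eventuallyEq.2 ⟨G t₁, hconst.mono fun _ ↦ not_not.1⟩)
  obtain ⟨t₂, hG_ne, h₂⟩ := (hG_freq.and_eventually h).exists
  by_contra hc
  have hc_sub : c - c' ≠ 0 := sub_ne_zero.2 hc
  by_cases hdet : G t₁ * G' t₂ - G t₂ * G' t₁ = 0
  · obtain ⟨s, hs₁, hs₂⟩ := (h₁.and h₂).exists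
    have elim_F : (c - c') * (G t₂ - G t₁) = 0 := by
      linear_combination G t₂ * hs₁ - G t₁ * hs₂ - F' s * hdet
    exact (mul_ne_zero hc_sub (sub_ne_zero.2 hG_ne)) elim_F
  · refine hF (eventuallyConst_iff_exists_eventuallyEq.2
      ⟨(c - c') * (G' t₁ - G' t₂) / (G t₁ * G' t₂ - G t₂ * G' t₁), ?_⟩)
    filter_upwards [h₁, h₂] with s hs₁ hs₂
    rw [eq_div_iff hdet]
    linear_combination G' t₂ * hs₁ - G' t₁ * hs₂

end Elimination

section Pi

open Filter Function

variable {ι : Type*} [Fintype ι] {X : ι → Type*} [∀ i, MeasurableSpace (X i)]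
  {μ : ∀ i, Measure (X i)} [∀ i, SigmaFinite (μ i)]

instance neZero_measure_pi [∀ i, NeZero (μ i)] : NeZero (Measure.pi μ) where
  out := by
    rw [← Measure.measure_univ_ne_zero, Measure.pi_univ]
    exact Finset.prod_ne_zero_iff.2 fun i _ ↦ NeZero.ne (μ i Set.univ)

theorem lintegral_lintegral_update [DecidableEq ι] {f : (∀ i, X i) → ENNReal} (hf : Measurable f)
    (i : ι) :
    ∫⁻ x, ∫⁻ t, f (update x i t) ∂μ i ∂Measure.pi μ =
      (∫⁻ x, f x ∂Measure.pi μ) * μ i Set.univ := by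
  obtain hX | ⟨⟨x₀⟩⟩ := isEmpty_or_nonempty (∀ i, X i)
  · simp only [Measure.eq_zero_of_isEmpty, lintegral_zero_measure, zero_mul]
  have hF : Measurable (∫⋯∫⁻_{i}, f ∂μ) := hf.lmarginal μ
  calc ∫⁻ x, ∫⁻ t, f (update x i t) ∂μ i ∂Measure.pi μ
      = (∫⋯∫⁻_Finset.univ, ∫⋯∫⁻_{i}, f ∂μ ∂μ) x₀ := by
        rw [← lintegral_eq_lmarginal_univ, lmarginal_singleton]
    _ = ∫⁻ t, (∫⋯∫⁻_Finset.univ.erase i, ∫⋯∫⁻_{i}, f ∂μ ∂μ) (update x₀ i t) ∂μ i :=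
        lmarginal_erase _ hF (Finset.mem_univ i) x₀
    _ = ∫⁻ t, (∫⋯∫⁻_Finset.univ, f ∂μ) (update x₀ i t) ∂μ i := by
        rw [lmarginal_singleton, ← lmarginal_erase' f hf (Finset.mem_univ i)]
    _ = (∫⁻ x, f x ∂Measure.pi μ) * μ i Set.univ := by
        rw [lmarginal_univ, lintegral_const]

theorem ae_ae_update_of_ae_pi [DecidableEq ι] {P : (∀ i, X i) → Prop}
    (hP : ∀ᵐ x ∂Measure.pi μ, P x) (i : ι) :
    ∀ᵐ x ∂Measure.pi μ, ∀ᵐ t ∂μ i, P (update x i t) := by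
  obtain ⟨N, hN_sub, hN_meas, hN_null⟩ := exists_measurable_superset_of_null (ae_iff.1 hP)
  have hf : Measurable (N.indicator (1 : (∀ i, X i) → ENNReal)) :=
    measurable_one.indicator hN_meas
  have hF : Measurable fun x ↦ ∫⁻ t, N.indicator 1 (update x i t) ∂μ i := by
    simpa only [lmarginal_singleton] using hf.lmarginal μ (s := {i})
  have hF_zero : ∫⁻ x, ∫⁻ t, N.indicator 1 (update x i t) ∂μ i ∂Measure.pi μ = 0 := by
    rw [lintegral_lintegral_update hf, lintegral_indicator_one hN_meas, hN_null, zero_mul]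
  filter_upwards [(lintegral_eq_zero_iff hF).1 hF_zero] with x hx
  filter_upwards [(lintegral_eq_zero_iff (hf.comp (measurable_update x))).1 hx] with t ht
  by_contra hPt
  exact one_ne_zero ((Set.indicator_of_mem (hN_sub hPt) 1).symm.trans ht)

theorem eq_of_ae_add_mul_prod_eq [∀ i, NeZero (μ i)] {K : Type*} [Field K]
    {F F' : ∀ i, X i → K} {c c' d d' : K} (hd : d ≠ 0) (hF : ∀ i x, F i x ≠ 0)
    {j k : ι} (hjk : j ≠ k)
    (hj : ¬ EventuallyConst (F j) (ae (μ j))) (hk : ¬ EventuallyConst (F k) (ae (μ k)))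
    (h : ∀ᵐ x ∂Measure.pi μ, c + d * ∏ i, F i (x i) = c' + d' * ∏ i, F' i (x i)) :
    c = c' := by
  classical
  obtain ⟨x, hx⟩ := (ae_ae_update_of_ae_pi (ae_ae_update_of_ae_pi h j) k).exists
  have hk_mem : k ∈ Finset.univ \ {j} := by simpa using hjk.symm
  simp only [apply_update, Finset.prod_update_of_mem (Finset.mem_univ j),
    Finset.prod_update_of_mem hk_mem, mul_left_comm d, mul_left_comm d'] at hx
  have hcoeff : d * ∏ i ∈ (Finset.univ \ {j}) \ {k}, F i (x i) ≠ 0 :=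
    mul_ne_zero hd (Finset.prod_ne_zero_iff.2 fun i _ ↦ hF i (x i))
  exact eq_of_eventually_add_mul_eq hj
    (mt (eventuallyConst_of_injective_comp (mul_left_injective₀ hcoeff)) hk) hx

theorem eventuallyConst_of_ae_sum_eq [∀ i, NeZero (μ i)] {E : Type*} [AddCommGroup E]
    {w : ∀ i, X i → E} {c : E} (h : ∀ᵐ x ∂Measure.pi μ, ∑ i, w i (x i) = c) (i : ι) :
    EventuallyConst (w i) (ae (μ i)) := by
  classical
  obtain ⟨x, hx⟩ := (ae_ae_update_of_ae_pi h i).exists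
  simp only [apply_update, Finset.sum_update_of_mem (Finset.mem_univ i)] at hx
  exact eventuallyConst_iff_exists_eventuallyEq.2 ⟨_, hx.mono fun _ ↦ eq_sub_of_add_eq⟩

end Pi

section Centered

open Filter

variable {E : Type*} [NormedAddCommGroup E] [NormedSpace ℝ E] [CompleteSpace E]

theorem ae_eq_zero_of_eventuallyConst_of_integral_eq_zero {X : Type*} [MeasurableSpace X]
    {μ : Measure X} {f : X → E} (hconst : EventuallyConst f (ae μ)) (hf : Integrable f μ)
    (hf_cent : ∫ x, f x ∂μ = 0) : f =ᵐ[μ] 0 := by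
  obtain ⟨d, hd⟩ := eventuallyConst_iff_exists_eventuallyEq.1 hconst
  obtain rfl | hμ := eq_or_ne μ 0
  · rw [ae_zero]
    exact eventually_bot
  have : NeZero μ := ⟨hμ⟩
  suffices hd_zero : d = 0 by rwa [hd_zero] at hd
  obtain hd_zero | hfin := integrable_const_iff.1 ((integrable_congr hd).1 hf)
  · exact hd_zero
  · have hfin : IsFiniteMeasure μ := hfin
    rw [integral_congr_ae hd, integral_const] at hf_cent
    exact (smul_eq_zero.1 hf_cent).resolve_left measureReal_univ_ne_zero

theorem ae_eq_zero_of_ae_sum_eq_of_integral_eq_zero {ι : Type*} [Fintype ι] {X : ι → Type*}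
    [∀ i, MeasurableSpace (X i)] {μ : ∀ i, Measure (X i)} [∀ i, SigmaFinite (μ i)]
    [∀ i, NeZero (μ i)] {w : ∀ i, X i → E} {c : E} (hw : ∀ i, Integrable (w i) (μ i))
    (hw_cent : ∀ i, ∫ x, w i x ∂μ i = 0)
    (h : ∀ᵐ x ∂Measure.pi μ, ∑ i, w i (x i) = c) :
    c = 0 ∧ ∀ i, w i =ᵐ[μ i] 0 := by
  have hw_zero (i : ι) : w i =ᵐ[μ i] 0 :=
    ae_eq_zero_of_eventuallyConst_of_integral_eq_zero (eventuallyConst_of_ae_sum_eq h i)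
      (hw i) (hw_cent i)
  obtain ⟨x, hx_sum, hx_zero⟩ := (h.and (Measure.ae_eq_pi hw_zero)).exists
  refine ⟨?_, hw_zero⟩
  rw [← hx_sum]
  exact Finset.sum_eq_zero fun i _ ↦ congrFun hx_zero i

end Centered

section Tilting

open Filter

variable {ι : Type*} [Fintype ι] {X : ι → Type*} [∀ i, MeasurableSpace (X i)]
  {μ : ∀ i, Measure (X i)} [∀ i, SigmaFinite (μ i)] [∀ i, NeZero (μ i)]
  {u u' : ∀ i, X i → ℝ}

theorem eq_of_ae_add_mul_exp_neg_sum_eq {c c' d d' α α' : ℝ} (hd : d ≠ 0) {j k : ι} (hjk : j ≠ k)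
    (hj : ¬ EventuallyConst (u j) (ae (μ j))) (hk : ¬ EventuallyConst (u k) (ae (μ k)))
    (h : ∀ᵐ x ∂Measure.pi μ, c + d * Real.exp (-α - ∑ i, u i (x i)) =
      c' + d' * Real.exp (-α' - ∑ i, u' i (x i))) :
    c = c' := by
  have exp_sub_sum (a : ℝ) (v : ι → ℝ) :
      Real.exp (-a - ∑ i, v i) = Real.exp (-a) * ∏ i, Real.exp (-v i) := by
    rw [sub_eq_add_neg, Real.exp_add, ← Finset.sum_neg_distrib, Real.exp_sum]
  have exp_neg_not_const {i : ι} (hi : ¬ EventuallyConst (u i) (ae (μ i))) :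
      ¬ EventuallyConst (fun t ↦ Real.exp (-u i t)) (ae (μ i)) :=
    mt (eventuallyConst_of_injective_comp (φ := fun y ↦ Real.exp (-y))
      (Real.exp_injective.comp neg_injective)) hi
  simp only [exp_sub_sum, ← mul_assoc] at h
  exact eq_of_ae_add_mul_prod_eq (F := fun i t ↦ Real.exp (-u i t))
    (F' := fun i t ↦ Real.exp (-u' i t)) (mul_ne_zero hd (Real.exp_ne_zero (-α)))
    (fun i t ↦ Real.exp_ne_zero (-u i t)) hjk (exp_neg_not_const hj) (exp_neg_not_const hk) h

theorem gaet_identifiability_general {g : (∀ i, X i) → ℝ} (hg : ∀ᵐ x ∂Measure.pi μ, g x ≠ 0)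
    {π π' α α' : ℝ} (hπ : π ≠ 1)
    (hu : ∀ i, Integrable (u i) (μ i)) (hu' : ∀ i, Integrable (u' i) (μ i))
    (hu_cent : ∀ i, ∫ t, u i t ∂μ i = 0) (hu'_cent : ∀ i, ∫ t, u' i t ∂μ i = 0)
    (hmix : ∀ᵐ x ∂Measure.pi μ,
      π * g x + (1 - π) * (g x * Real.exp (-α - ∑ i, u i (x i))) =
        π' * g x + (1 - π') * (g x * Real.exp (-α' - ∑ i, u' i (x i))))
    {j k : ι} (hjk : j ≠ k)
    (hj : ¬ EventuallyConst (u j) (ae (μ j))) (hk : ¬ EventuallyConst (u k) (ae (μ k))) :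
    π = π' ∧ α = α' ∧ ∀ i, u i =ᵐ[μ i] u' i := by
  have hπ_sub : 1 - π ≠ 0 := sub_ne_zero.2 hπ.symm
  have hratio : ∀ᵐ x ∂Measure.pi μ, π + (1 - π) * Real.exp (-α - ∑ i, u i (x i)) =
      π' + (1 - π') * Real.exp (-α' - ∑ i, u' i (x i)) := by
    filter_upwards [hmix, hg] with x hx hgx
    exact mul_left_cancel₀ hgx (by linear_combination hx)
  obtain rfl : π = π' := eq_of_ae_add_mul_exp_neg_sum_eq hπ_sub hjk hj hk hratio
  have hsum : ∀ᵐ x ∂Measure.pi μ, ∑ i, (u i - u' i) (x i) = α' - α := by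
    filter_upwards [hratio] with x hx
    have hexponent := Real.exp_injective (mul_left_cancel₀ hπ_sub (add_left_cancel hx))
    simp only [Pi.sub_apply, Finset.sum_sub_distrib]
    linarith
  have hsub_cent (i : ι) : ∫ t, (u i - u' i) t ∂μ i = 0 := by
    rw [integral_sub' (hu i) (hu' i), hu_cent, hu'_cent, sub_zero]
  obtain ⟨hα, hu_eq⟩ := ae_eq_zero_of_ae_sum_eq_of_integral_eq_zero
    (fun i ↦ (hu i).sub (hu' i)) hsub_cent hsum
  exact ⟨rfl, (sub_eq_zero.1 hα).symm, fun i ↦ (hu_eq i).mono fun _ ↦ sub_eq_zero.1⟩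

end Tilting

/-- Identifiability of the generalized additive exponential tilting (GAET) model
for `p ≥ 2` continuous features. -/
theorem gaet_identifiability
    (p : ℕ) (hp : 2 ≤ p)
    (T : Fin p → Set ℝ)
    (hTcompact : ∀ j, IsCompact (T j))
    (hTpos : ∀ j, 0 < volume (T j))
    (g : (Fin p → ℝ) → ℝ)
    (hg_meas : Measurable g)
    (hg_pos : ∀ x ∈ Set.univ.pi T, 0 < g x)
    (hg_int : ∫ x in Set.univ.pi T, g x = 1)
    (π π' α α' : ℝ)
    (hπ : π ∈ Set.Ioo (0:ℝ) 1) (hπ' : π' ∈ Set.Ioo (0:ℝ) 1)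
    (u u' : Fin p → ℝ → ℝ)
    (hu_meas : ∀ j, Measurable (u j)) (hu'_meas : ∀ j, Measurable (u' j))
    (hu_bdd : ∀ j, ∃ C : ℝ, ∀ x ∈ T j, |u j x| ≤ C)
    (hu'_bdd : ∀ j, ∃ C : ℝ, ∀ x ∈ T j, |u' j x| ≤ C)
    (hu_cent : ∀ j, ∫ x in T j, u j x = 0)
    (hu'_cent : ∀ j, ∫ x in T j, u' j x = 0)
    (h h' : (Fin p → ℝ) → ℝ)
    (hh_def : ∀ x, h x = g x * Real.exp (-α - ∑ j, u j (x j)))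
    (hh'_def : ∀ x, h' x = g x * Real.exp (-α' - ∑ j, u' j (x j)))
    (hh_int : ∫ x in Set.univ.pi T, h x = 1)
    (hh'_int : ∫ x in Set.univ.pi T, h' x = 1)
    (hmix : ∀ᵐ x ∂(volume.restrict (Set.univ.pi T)),
      π * g x + (1 - π) * h x = π' * g x + (1 - π') * h' x)
    (j k : Fin p) (hjk : j ≠ k)
    (huj : ¬ ∃ c : ℝ, ∀ᵐ x ∂(volume.restrict (T j)), u j x = c)
    (huk : ¬ ∃ c : ℝ, ∀ᵐ x ∂(volume.restrict (T k)), u k x = c) :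
    π = π' ∧ α = α' ∧
      ∀ j : Fin p, ∀ᵐ x ∂(volume.restrict (T j)), u j x = u' j x := by
  have (i : Fin p) : NeZero (volume (T i)) := ⟨(hTpos i).ne'⟩
  have hT (i : Fin p) : MeasurableSet (T i) := (hTcompact i).measurableSet
  have integrableOn_T {v : Fin p → ℝ → ℝ} (hv_meas : ∀ i, Measurable (v i))
      (hv_bdd : ∀ i, ∃ C : ℝ, ∀ x ∈ T i, |v i x| ≤ C) (i : Fin p) : IntegrableOn (v i) (T i) :=
    Measure.integrableOn_of_bounded (hTcompact i).measure_ne_top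
      (hv_meas i).aestronglyMeasurable (ae_restrict_of_forall_mem (hT i) (hv_bdd i).choose_spec)
  have hg_ne : ∀ᵐ x ∂volume.restrict (Set.univ.pi T), g x ≠ 0 :=
    ae_restrict_of_forall_mem (.univ_pi hT) fun x hx ↦ (hg_pos x hx).ne'
  simp only [hh_def, hh'_def] at hmix
  rw [volume_pi, Measure.restrict_pi_pi] at hmix hg_ne
  exact gaet_identifiability_general hg_ne hπ.2.ne (integrableOn_T hu_meas hu_bdd)
    (integrableOn_T hu'_meas hu'_bdd) hu_cent hu'_cent hmix hjk
    (mt Filter.eventuallyConst_iff_exists_eventuallyEq.1 huj)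
    (mt Filter.eventuallyConst_iff_exists_eventuallyEq.1 huk)
end

section
/- Let p ≥ 2 and let T_1, …, T_p be nonempty finite sets, T = T_1 × ⋯ × T_p. Let g : T → (0, ∞) be a probability mass function (Σ_{x∈T} g(x) = 1). Suppose two parameter tuples (π, α, u_1, …, u_p) and (π̃, α̃, ũ_1, …, ũ_p), with π, π̃ ∈ (0,1), α, α̃ ∈ ℝ, and functions u_j, ũ_j : T_j → ℝ satisfying the discrete centering constraints Σ_{t∈T_j} u_j(t) = 0 and Σ_{t∈T_j} ũ_j(t) = 0, are such that h(x) := g(x)·exp(−α − Σ_{j=1}^p u_j(x_j)) and h̃(x) := g(x)·exp(−α̃ − Σ_{j=1}^p ũ_j(x_j)) are both probability mass functions on T. If π g(x) + (1−π) h(x) = π̃ g(x) + (1−π̃) h̃(x) for every x ∈ T, and there exist two distinct indices j ≠ k such that |T_j| > 1, |T_k| > 1, and u_j and u_k are not constant functions, then π = π̃, α = α̃, and u_j = ũ_j for every j = 1, …, p. -/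
/-!
Dividing the mixture identity by `g` gives
`(1 - π) exp (-η) + (π - π') = (1 - π') exp (-η')` with `η`, `η'` additive in the coordinates.
Exponentials of additive functions have vanishing `2 × 2` minors on every rectangle obtained by
moving two coordinates. If `η` really varies in both coordinates, adding a nonzero constant
destroys that property, hence `π = π'`. Then `η = η'`, and varying one coordinate at a time shows
that the components agree up to constants, which the centering fixes to be zero.
-/

open Function

theorem eq_zero_of_mul_eq_mul_of_add_mul_add_eq {R : Type*} [CommRing R] [NoZeroDivisors R]
    {a b c d δ : R} (hminor : a * d = b * c)
    (hminor_add : (a + δ) * (d + δ) = (b + δ) * (c + δ)) (hba : b ≠ a) (hca : c ≠ a) :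
    δ = 0 := by
  have hprod : δ * ((b - a) * (c - a)) = 0 := by
    linear_combination a * hminor_add - (a + δ) * hminor
  exact (mul_eq_zero.1 hprod).resolve_right
    (mul_ne_zero (sub_ne_zero.2 hba) (sub_ne_zero.2 hca))

theorem eq_of_sum_eq_of_sub_eq_sub {A M : Type*} [Fintype A] [AddCommGroup M]
    [IsAddTorsionFree M] {f f' : A → M} (hsum : ∑ t, f t = ∑ t, f' t)
    (hsub : ∀ s t, f s - f t = f' s - f' t) : f = f' := by
  funext t
  have hconst : ∀ s, f s - f' s = f t - f' t := fun s => sub_eq_sub_iff_sub_eq_sub.1 (hsub s t)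
  have hcard : Fintype.card A • (f t - f' t) = 0 :=
    calc Fintype.card A • (f t - f' t) = ∑ s, (f s - f' s) := by
          simp only [hconst, Finset.sum_const, Finset.card_univ]
      _ = 0 := by rw [Finset.sum_sub_distrib, hsum, sub_self]
  have : Nonempty A := ⟨t⟩
  exact sub_eq_zero.1 ((nsmul_eq_zero_iff_right Fintype.card_ne_zero).1 hcard)

section AdditivePredictor

variable {ι : Type*} [Fintype ι] {T : ι → Type*}

/-- The additive predictor `α + ∑ j, u j (x j)`, the model for the log density ratio
`log (g x / h x)` in generalized additive exponential tilting. -/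
def additivePredictor {M : Type*} [AddCommMonoid M] (α : M) (u : ∀ j, T j → M) (x : ∀ j, T j) :
    M :=
  α + ∑ j, u j (x j)

section Group

variable {M : Type*} [AddCommGroup M]

theorem additivePredictor_update [DecidableEq ι] (α : M) (u : ∀ j, T j → M) (x : ∀ j, T j)
    (i : ι) (t : T i) :
    additivePredictor α u (update x i t) = additivePredictor α u x + (u i t - u i (x i)) := by
  simp only [additivePredictor, apply_update (fun l => u l),
    Finset.sum_update_of_mem (Finset.mem_univ i),
    Finset.sum_eq_add_sum_sdiff_singleton_of_mem (Finset.mem_univ i) (fun l => u l (x l))]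
  abel

theorem additivePredictor_add_update_update [DecidableEq ι] (α : M) (u : ∀ j, T j → M)
    (x : ∀ j, T j) {j k : ι} (hjk : j ≠ k) (b : T j) (c : T k) :
    additivePredictor α u x + additivePredictor α u (update (update x j b) k c) =
      additivePredictor α u (update x j b) + additivePredictor α u (update x k c) := by
  simp only [additivePredictor_update, update_of_ne hjk.symm]
  abel

theorem component_sub_eq_of_additivePredictor_eq [∀ j, Nonempty (T j)] {α α' : M}
    {u u' : ∀ j, T j → M} (heq : additivePredictor α u = additivePredictor α' u') (i : ι)
    (s t : T i) : u i s - u i t = u' i s - u' i t := by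
  classical
  obtain ⟨x, rfl⟩ := surjective_eval i t
  have hmove := congrFun heq (update x i s)
  rw [additivePredictor_update, additivePredictor_update, heq] at hmove
  exact add_left_cancel hmove

theorem eq_of_additivePredictor_eq_of_sum_eq [IsAddTorsionFree M] [∀ j, Fintype (T j)]
    [∀ j, Nonempty (T j)] {α α' : M} {u u' : ∀ j, T j → M}
    (heq : additivePredictor α u = additivePredictor α' u')
    (hsum : ∀ j, ∑ t, u j t = ∑ t, u' j t) : α = α' ∧ u = u' := by
  have hu : u = u' := funext fun i =>
    eq_of_sum_eq_of_sub_eq_sub (hsum i) (component_sub_eq_of_additivePredictor_eq heq i)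
  subst hu
  exact ⟨add_right_cancel (congrFun heq fun _ => Classical.arbitrary _), rfl⟩

end Group

theorem exp_neg_additivePredictor_mul_update_update [DecidableEq ι] (α : ℝ) (u : ∀ j, T j → ℝ)
    (x : ∀ j, T j) {j k : ι} (hjk : j ≠ k) (b : T j) (c : T k) :
    Real.exp (-additivePredictor α u x) *
        Real.exp (-additivePredictor α u (update (update x j b) k c)) =
      Real.exp (-additivePredictor α u (update x j b)) *
        Real.exp (-additivePredictor α u (update x k c)) := by
  rw [← Real.exp_add, ← Real.exp_add, ← neg_add, ← neg_add,
    additivePredictor_add_update_update α u x hjk b c]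

theorem exp_neg_additivePredictor_update_ne [DecidableEq ι] (α : ℝ) {u : ∀ j, T j → ℝ}
    {x : ∀ j, T j} {i : ι} {t : T i} (ht : u i t ≠ u i (x i)) :
    Real.exp (-additivePredictor α u (update x i t)) ≠ Real.exp (-additivePredictor α u x) := by
  rw [additivePredictor_update, Real.exp_injective.ne_iff, neg_injective.ne_iff]
  exact add_ne_left.2 (sub_ne_zero.2 ht)

theorem eq_zero_of_mul_exp_neg_additivePredictor_add_eq [∀ j, Nonempty (T j)]
    {a a' δ α α' : ℝ} {u u' : ∀ j, T j → ℝ} {j k : ι} (ha : a ≠ 0) (hjk : j ≠ k)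
    (huj : ¬ ∃ c : ℝ, ∀ t, u j t = c) (huk : ¬ ∃ c : ℝ, ∀ t, u k t = c)
    (heq : ∀ x, a * Real.exp (-additivePredictor α u x) + δ =
      a' * Real.exp (-additivePredictor α' u' x)) : δ = 0 := by
  classical
  let x : ∀ j, T j := fun _ => Classical.arbitrary _
  obtain ⟨b, hb⟩ := not_forall.1 (not_exists.1 huj (u j (x j)))
  obtain ⟨c, hc⟩ := not_forall.1 (not_exists.1 huk (u k (x k)))
  refine eq_zero_of_mul_eq_mul_of_add_mul_add_eq
    (a := a * Real.exp (-additivePredictor α u x))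
    (b := a * Real.exp (-additivePredictor α u (update x j b)))
    (c := a * Real.exp (-additivePredictor α u (update x k c)))
    (d := a * Real.exp (-additivePredictor α u (update (update x j b) k c))) ?_ ?_
    ((mul_right_injective₀ ha).ne (exp_neg_additivePredictor_update_ne α hb))
    ((mul_right_injective₀ ha).ne (exp_neg_additivePredictor_update_ne α hc))
  · linear_combination a ^ 2 * exp_neg_additivePredictor_mul_update_update α u x hjk b c
  · simp only [heq]
    linear_combination a' ^ 2 * exp_neg_additivePredictor_mul_update_update α' u' x hjk b c

end AdditivePredictor

theorem gaet_identifiability_discrete_general {ι : Type*} [Fintype ι]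
    {T : ι → Type*} [∀ j, Fintype (T j)] [∀ j, Nonempty (T j)]
    {g h h' : (∀ j, T j) → ℝ} (hg : ∀ x, g x ≠ 0)
    {π π' α α' : ℝ} (hπ : π ≠ 1) {u u' : ∀ j, T j → ℝ}
    (hu_sum : ∀ j, ∑ t, u j t = ∑ t, u' j t)
    (hh_def : ∀ x, h x = g x * Real.exp (-α - ∑ j, u j (x j)))
    (hh'_def : ∀ x, h' x = g x * Real.exp (-α' - ∑ j, u' j (x j)))
    (hmix : ∀ x, π * g x + (1 - π) * h x = π' * g x + (1 - π') * h' x)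
    {j k : ι} (hjk : j ≠ k)
    (huj : ¬ ∃ c : ℝ, ∀ t, u j t = c) (huk : ¬ ∃ c : ℝ, ∀ t, u k t = c) :
    π = π' ∧ α = α' ∧ u = u' := by
  have hweight : 1 - π ≠ 0 := sub_ne_zero.2 hπ.symm
  have hratio : ∀ x, (1 - π) * Real.exp (-additivePredictor α u x) + (π - π') =
      (1 - π') * Real.exp (-additivePredictor α' u' x) := by
    intro x
    have hx := hmix x
    rw [hh_def, hh'_def, ← neg_add', ← neg_add'] at hx
    apply mul_left_cancel₀ (hg x)
    simp only [additivePredictor]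
    linear_combination hx
  obtain rfl : π = π' :=
    sub_eq_zero.1 (eq_zero_of_mul_exp_neg_additivePredictor_add_eq hweight hjk huj huk hratio)
  have hpredictor : additivePredictor α u = additivePredictor α' u' := funext fun x =>
    neg_injective (Real.exp_injective (mul_left_cancel₀ hweight (by simpa using hratio x)))
  exact ⟨rfl, eq_of_additivePredictor_eq_of_sum_eq hpredictor hu_sum⟩

/-- Identifiability of the GAET model with discrete (finite) features, `p ≥ 2`. -/
theorem gaet_identifiability_discrete
    (p : ℕ) (hp : 2 ≤ p)
    (T : Fin p → Type*) [∀ j, Fintype (T j)] [∀ j, Nonempty (T j)]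
    (g : (∀ j, T j) → ℝ)
    (hg_pos : ∀ x, 0 < g x)
    (hg_sum : ∑ x, g x = 1)
    (π π' α α' : ℝ)
    (hπ : π ∈ Set.Ioo (0:ℝ) 1) (hπ' : π' ∈ Set.Ioo (0:ℝ) 1)
    (u u' : ∀ j, T j → ℝ)
    (hu_cent : ∀ j, ∑ t, u j t = 0)
    (hu'_cent : ∀ j, ∑ t, u' j t = 0)
    (h h' : (∀ j, T j) → ℝ)
    (hh_def : ∀ x, h x = g x * Real.exp (-α - ∑ j, u j (x j)))
    (hh'_def : ∀ x, h' x = g x * Real.exp (-α' - ∑ j, u' j (x j)))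
    (hh_sum : ∑ x, h x = 1)
    (hh'_sum : ∑ x, h' x = 1)
    (hmix : ∀ x, π * g x + (1 - π) * h x = π' * g x + (1 - π') * h' x)
    (j k : Fin p) (hjk : j ≠ k)
    (hcardj : 1 < Fintype.card (T j))
    (hcardk : 1 < Fintype.card (T k))
    (huj : ¬ ∃ c : ℝ, ∀ t, u j t = c)
    (huk : ¬ ∃ c : ℝ, ∀ t, u k t = c) :
    π = π' ∧ α = α' ∧ ∀ j : Fin p, ∀ t : T j, u j t = u' j t := by
  obtain ⟨hπ_eq, hα, hu⟩ := gaet_identifiability_discrete_general (fun x => (hg_pos x).ne')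
    hπ.2.ne (fun i => (hu_cent i).trans (hu'_cent i).symm) hh_def hh'_def hmix hjk huj huk
  exact ⟨hπ_eq, hα, fun i t => congrFun (congrFun hu i) t⟩
end

section
/- Let (Ω, μ) be a measure space, let g and h be probability densities with respect to μ (g, h ≥ 0 and ∫ g dμ = ∫ h dμ = 1), and let π ∈ (0,1). For any π* ∈ (0, π), define h*(x) = ((π − π*)/(1 − π*))·g(x) + ((1 − π)/(1 − π*))·h(x). Then: (i) h* is a probability density with respect to μ; (ii) π g(x) + (1−π) h(x) = π* g(x) + (1−π*) h*(x) for every x; and (iii) if g ≠ h on a set of positive μ-measure, then h* ≠ h on a set of positive μ-measure. Consequently the pair (π, h) is not uniquely determined by the densities g and π g + (1−π) h without further assumptions. -/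
open MeasureTheory

/-!
The mixture `π g + (1 - π) h` is the point with parameter `π` on the line from `h` to `g`. The same
point is reached from the one with parameter `(π - π*) / (1 - π*)` by covering a fraction `π*` of
the remaining way to `g`. This intermediate point is `h*`: part of the positive mass has been
absorbed into the negative component. It is a density because densities form a convex set, and it
differs from `h` wherever `g` does because the line is traversed injectively.
-/

open AffineMap (lineMap)

section ResidualParameter

variable {k : Type*} [Field k] {r s : k}

theorem one_sub_sub_div_one_sub (hs : s ≠ 1) : 1 - (r - s) / (1 - s) = (1 - r) / (1 - s) := by
  rw [one_sub_div (sub_ne_zero.2 hs.symm), sub_sub_sub_cancel_right]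

theorem lineMap_lineMap_sub_div_one_sub {V P : Type*} [AddCommGroup V] [Module k V]
    [AddTorsor V P] (p₀ p₁ : P) (hs : s ≠ 1) :
    lineMap (lineMap p₀ p₁ ((r - s) / (1 - s))) p₁ s = lineMap p₀ p₁ r := by
  rw [AffineMap.lineMap_lineMap_left, one_sub_sub_div_one_sub hs,
    mul_div_cancel₀ _ (sub_ne_zero.2 hs.symm), sub_sub_cancel]

theorem sub_div_one_sub_mem_Ioo [LinearOrder k] [IsStrictOrderedRing k] (hsr : s < r)
    (hr : r < 1) : (r - s) / (1 - s) ∈ Set.Ioo 0 1 := by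
  have hs : 0 < 1 - s := sub_pos.2 (hsr.trans hr)
  exact ⟨div_pos (sub_pos.2 hsr) hs, (div_lt_one hs).2 (sub_lt_sub_right hr s)⟩

end ResidualParameter

theorem lineMap_ne_left_iff {k V P : Type*} [Ring k] [IsDomain k] [AddCommGroup V] [Module k V]
    [Module.IsTorsionFree k V] [AddTorsor V P] {p₀ p₁ : P} {c : k} (hc : c ≠ 0) :
    lineMap p₀ p₁ c ≠ p₀ ↔ p₁ ≠ p₀ := by
  rw [ne_eq, AffineMap.lineMap_eq_left_iff, or_iff_left hc, ne_comm]

/-- The probability densities with respect to `μ`, as real-valued functions that are nonnegative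
everywhere. The Bochner integral of a non-integrable function is `0`, so integral `1` encodes
integrability as well as normalization. -/
def probDensities {Ω : Type*} [MeasurableSpace Ω] (μ : Measure Ω) : Set (Ω → ℝ) :=
  {f | (∀ x, 0 ≤ f x) ∧ ∫ x, f x ∂μ = 1}

theorem convex_probDensities {Ω : Type*} [MeasurableSpace Ω] (μ : Measure Ω) :
    Convex ℝ (probDensities μ) := by
  rintro f ⟨hf_nonneg, hf_one⟩ g ⟨hg_nonneg, hg_one⟩ a b ha hb hab
  have hf_int : Integrable f μ := integrable_of_integral_eq_one hf_one
  have hg_int : Integrable g μ := integrable_of_integral_eq_one hg_one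
  refine ⟨fun x => ?_, ?_⟩
  · exact add_nonneg (mul_nonneg ha (hf_nonneg x)) (mul_nonneg hb (hg_nonneg x))
  · calc
      ∫ x, (a • f + b • g) x ∂μ = a * ∫ x, f x ∂μ + b * ∫ x, g x ∂μ := by
        rw [integral_add' (hf_int.smul a) (hg_int.smul b)]
        simp only [Pi.smul_apply, smul_eq_mul, integral_const_mul]
      _ = 1 := by rw [hf_one, hg_one, mul_one, mul_one, hab]

/-- Non-identifiability of the PU mixture model without further assumptions:
for any `π* ∈ (0, π)`, the alternative negative-class density
`h* = ((π − π*)/(1 − π*))·g + ((1 − π)/(1 − π*))·h` is a probability density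
producing exactly the same mixture, and it genuinely differs from `h`
whenever `g` differs from `h` on a set of positive measure. -/
theorem pu_mixture_not_identifiable
    {Ω : Type*} [MeasurableSpace Ω] (μ : Measure Ω)
    (g h : Ω → ℝ)
    (hg_nonneg : ∀ x, 0 ≤ g x) (hh_nonneg : ∀ x, 0 ≤ h x)
    (hg_int : Integrable g μ) (hh_int : Integrable h μ)
    (hg_one : ∫ x, g x ∂μ = 1) (hh_one : ∫ x, h x ∂μ = 1)
    (π πs : ℝ) (hπ : π ∈ Set.Ioo (0:ℝ) 1) (hπs : πs ∈ Set.Ioo (0:ℝ) π)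
    (hs : Ω → ℝ)
    (hhs_def : ∀ x, hs x = ((π - πs) / (1 - πs)) * g x + ((1 - π) / (1 - πs)) * h x) :
    (∀ x, 0 ≤ hs x) ∧ (∫ x, hs x ∂μ = 1) ∧
    (∀ x, π * g x + (1 - π) * h x = πs * g x + (1 - πs) * hs x) ∧
    (0 < μ {x | g x ≠ h x} → 0 < μ {x | hs x ≠ h x}) := by
  have hπs_one : πs ≠ 1 := (hπs.2.trans hπ.2).ne
  have ht := sub_div_one_sub_mem_Ioo hπs.2 hπ.2
  have hhs : hs = lineMap h g ((π - πs) / (1 - πs)) := by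
    funext x
    rw [hhs_def, AffineMap.pi_lineMap_apply, AffineMap.lineMap_apply_ring,
      one_sub_sub_div_one_sub hπs_one, add_comm]
  have hhs_mem : hs ∈ probDensities μ :=
    hhs ▸ (convex_probDensities μ).lineMap_mem ⟨hh_nonneg, hh_one⟩ ⟨hg_nonneg, hg_one⟩
      (Set.Ioo_subset_Icc_self ht)
  have hmix : lineMap h g π = lineMap hs g πs := by
    rw [hhs, lineMap_lineMap_sub_div_one_sub _ _ hπs_one]
  refine ⟨hhs_mem.1, hhs_mem.2, fun x => ?_, fun hgh => ?_⟩
  · simpa only [AffineMap.pi_lineMap_apply, AffineMap.lineMap_apply_ring, add_comm]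
      using congrFun hmix x
  · simpa only [hhs, AffineMap.pi_lineMap_apply, lineMap_ne_left_iff ht.1.ne'] using hgh
end

section
/- Let T ⊂ ℝ be compact with positive Lebesgue measure, and let g be a measurable probability density with g > 0 on T and ∫_T g = 1. Let π ∈ (0,1), α ∈ ℝ, and let u : T → ℝ be a bounded measurable function with ∫_T u(x) dx = 0 such that h(x) := g(x)·exp(−α − u(x)) is a probability density on T. Then for every π* ∈ (0, π) there exist α* ∈ ℝ, a bounded measurable function u* : T → ℝ with ∫_T u*(x) dx = 0, and a probability density h* > 0 on T such that log(g(x)/h*(x)) = α* + u*(x) for all x ∈ T and π g(x) + (1−π) h(x) = π* g(x) + (1−π*) h*(x) for all x ∈ T. In particular, since π* ≠ π, the one-dimensional (p = 1) generalized additive exponential tilting model is not identifiable. -/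
/-!
With a single component the tilting model restricts `h` only through boundedness of `log (g / h)`:
the average of this function over `T` serves as `α` and the rest as `u`. Lowering `π` to `π*` forces
`h* = a g + (1 - a) h` with `a = (π - π*) / (1 - π*) ∈ (0, 1)`, and mixing some `g` into `h` keeps
the log ratio bounded: it lies between `min 0 (log (g / h))` and `-log a`.
-/

open MeasureTheory

section PointwiseMixture

variable {a x y : ℝ}

lemma log_div_mul_exp (hx : x ≠ 0) : Real.log (x / (x * Real.exp y)) = -y := by
  rw [div_mul_cancel_left₀ hx, Real.log_inv, Real.log_exp]

lemma mixture_pos (ha₀ : 0 ≤ a) (ha₁ : a ≤ 1) (hx : 0 < x) (hy : 0 < y) :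
    0 < a * x + (1 - a) * y :=
  (lt_min hx hy).trans_le <|
    Convex.min_le_combo x y ha₀ (sub_nonneg.2 ha₁) (add_sub_cancel a 1)

lemma min_zero_log_div_le_log_div_mixture (ha₀ : 0 ≤ a) (ha₁ : a ≤ 1) (hx : 0 < x)
    (hy : 0 < y) :
    min 0 (Real.log (x / y)) ≤ Real.log (x / (a * x + (1 - a) * y)) := by
  have hmix := mixture_pos ha₀ ha₁ hx hy
  have mixture_le_max : a * x + (1 - a) * y ≤ max x y :=
    Convex.combo_le_max x y ha₀ (sub_nonneg.2 ha₁) (add_sub_cancel a 1)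
  rcases le_max_iff.1 mixture_le_max with hle | hle
  · exact (min_le_left _ _).trans (Real.log_nonneg ((one_le_div hmix).2 hle))
  · exact (min_le_right _ _).trans (Real.log_le_log (div_pos hx hy) (by gcongr))

lemma log_div_mixture_le_neg_log (ha₀ : 0 < a) (ha₁ : a ≤ 1) (hx : 0 < x) (hy : 0 < y) :
    Real.log (x / (a * x + (1 - a) * y)) ≤ -Real.log a := by
  have hmix := mixture_pos ha₀.le ha₁ hx hy
  have le_mixture : a * x ≤ a * x + (1 - a) * y :=
    le_add_of_nonneg_right (mul_nonneg (sub_nonneg.2 ha₁) hy.le)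
  rw [← Real.log_inv]
  refine Real.log_le_log (div_pos hx hmix) ?_
  rwa [div_le_iff₀ hmix, le_inv_mul_iff₀ ha₀]

lemma abs_log_div_mixture_le {c : ℝ} (ha₀ : 0 < a) (ha₁ : a ≤ 1) (hx : 0 < x) (hy : 0 < y)
    (hc : c ≤ Real.log (x / y)) :
    |Real.log (x / (a * x + (1 - a) * y))| ≤ max (-min 0 c) (-Real.log a) := by
  have lower := min_zero_log_div_le_log_div_mixture ha₀.le ha₁ hx hy
  have upper := log_div_mixture_le_neg_log ha₀ ha₁ hx hy
  refine abs_le'.2 ⟨upper.trans (le_max_right _ _), (neg_le_neg ?_).trans (le_max_left _ _)⟩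
  exact (min_le_min_left 0 hc).trans lower

end PointwiseMixture

lemma mixture_eq_mixture_reweighted {π πs : ℝ} (hπs : πs ≠ 1) (x y : ℝ) :
    π * x + (1 - π) * y =
      πs * x + (1 - πs) * ((π - πs) / (1 - πs) * x + (1 - (π - πs) / (1 - πs)) * y) := by
  have : 1 - πs ≠ 0 := sub_ne_zero.2 hπs.symm
  field_simp
  ring

section Tilting

variable {X : Type*} [MeasurableSpace X] {μ : Measure X} {T : Set X} {g h : X → ℝ}

lemma integral_mixture_eq_one (hg : ∫ x, g x ∂μ = 1) (hh : ∫ x, h x ∂μ = 1) (a : ℝ) :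
    ∫ x, (a * g x + (1 - a) * h x) ∂μ = 1 := by
  rw [integral_add ((integrable_of_integral_eq_one hg).const_mul a)
      ((integrable_of_integral_eq_one hh).const_mul (1 - a)),
    integral_const_mul, integral_const_mul, hg, hh]
  ring

/-- The generalized additive exponential tilting model with `p = 1`: relative to `g`, the density
`h` has log ratio `α + u`, where the component `u` is bounded and centered on `T`. A density on `T`
is encoded as a measurable function on the ambient space which is positive on `T` and has integral
one over `T`. -/
structure IsExponentialTilt (μ : Measure X) (T : Set X) (g h : X → ℝ) (α : ℝ) (u : X → ℝ) :
    Prop where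
  measurable_component : Measurable u
  bounded_component : ∃ C : ℝ, ∀ x ∈ T, |u x| ≤ C
  centered_component : ∫ x in T, u x ∂μ = 0
  measurable : Measurable h
  pos : ∀ x ∈ T, 0 < h x
  integral_eq_one : ∫ x in T, h x ∂μ = 1
  log_ratio : ∀ x ∈ T, Real.log (g x / h x) = α + u x

lemma isExponentialTilt_setAverage_log_div {C : ℝ} (hT : μ T ≠ ⊤) (hg_meas : Measurable g)
    (hh_meas : Measurable h) (hh_pos : ∀ x ∈ T, 0 < h x) (hh_one : ∫ x in T, h x ∂μ = 1)
    (hC : ∀ x ∈ T, |Real.log (g x / h x)| ≤ C) :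
    IsExponentialTilt μ T g h (⨍ x in T, Real.log (g x / h x) ∂μ)
      (fun x => Real.log (g x / h x) - ⨍ y in T, Real.log (g y / h y) ∂μ) where
  measurable_component := by fun_prop
  bounded_component :=
    ⟨C + |⨍ y in T, Real.log (g y / h y) ∂μ|, fun x hx =>
      (abs_sub _ _).trans (add_le_add_left (hC x hx) _)⟩
  centered_component :=
    have : IsFiniteMeasure (μ.restrict T) := isFiniteMeasure_restrict.2 hT
    integral_sub_average _ _
  measurable := hh_meas
  pos := hh_pos
  integral_eq_one := hh_one
  log_ratio _ _ := (add_sub_cancel _ _).symm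

theorem gaet_p_eq_one_not_identifiable_general {c π πs : ℝ} (hT : μ T ≠ ⊤)
    (hg_meas : Measurable g) (hh_meas : Measurable h)
    (hg_pos : ∀ x ∈ T, 0 < g x) (hh_pos : ∀ x ∈ T, 0 < h x)
    (hg_one : ∫ x in T, g x ∂μ = 1) (hh_one : ∫ x in T, h x ∂μ = 1)
    (hc : ∀ x ∈ T, c ≤ Real.log (g x / h x)) (hπ : π ≤ 1) (hπs : πs < π) :
    ∃ (αs : ℝ) (us hs : X → ℝ), IsExponentialTilt μ T g hs αs us ∧
      ∀ x, π * g x + (1 - π) * h x = πs * g x + (1 - πs) * hs x := by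
  have hπs_one : πs < 1 := hπs.trans_le hπ
  set a := (π - πs) / (1 - πs)
  have ha₀ : 0 < a := div_pos (sub_pos.2 hπs) (sub_pos.2 hπs_one)
  have ha₁ : a ≤ 1 := (div_le_one (sub_pos.2 hπs_one)).2 (sub_le_sub_right hπ πs)
  exact ⟨_, _, fun x => a * g x + (1 - a) * h x,
    isExponentialTilt_setAverage_log_div hT hg_meas (by fun_prop)
      (fun x hx => mixture_pos ha₀.le ha₁ (hg_pos x hx) (hh_pos x hx))
      (integral_mixture_eq_one hg_one hh_one a)
      (fun x hx => abs_log_div_mixture_le ha₀ ha₁ (hg_pos x hx) (hh_pos x hx) (hc x hx)),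
    fun x => mixture_eq_mixture_reweighted hπs_one.ne (g x) (h x)⟩

end Tilting

/-- Non-identifiability of the one-dimensional (p = 1) generalized additive
exponential tilting model: for every `π* ∈ (0, π)` one can find parameters
`(α*, u*)` and a probability density `h*` satisfying the GAET structure and
producing exactly the same mixture density. -/
theorem gaet_p_eq_one_not_identifiable
    (T : Set ℝ) (hT_compact : IsCompact T) (hT_pos : 0 < volume T)
    (g : ℝ → ℝ) (hg_meas : Measurable g)
    (hg_pos : ∀ x ∈ T, 0 < g x)
    (hg_one : ∫ x in T, g x = 1)
    (π α : ℝ) (hπ : π ∈ Set.Ioo (0:ℝ) 1)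
    (u : ℝ → ℝ) (hu_meas : Measurable u)
    (hu_bdd : ∃ C : ℝ, ∀ x ∈ T, |u x| ≤ C)
    (hu_cent : ∫ x in T, u x = 0)
    (h : ℝ → ℝ) (hh_def : ∀ x, h x = g x * Real.exp (-α - u x))
    (hh_one : ∫ x in T, h x = 1) :
    ∀ πs ∈ Set.Ioo (0:ℝ) π, ∃ (αs : ℝ) (us hs : ℝ → ℝ),
      Measurable us ∧ (∃ C : ℝ, ∀ x ∈ T, |us x| ≤ C) ∧ (∫ x in T, us x = 0) ∧
      Measurable hs ∧ (∀ x ∈ T, 0 < hs x) ∧ (∫ x in T, hs x = 1) ∧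
      (∀ x ∈ T, Real.log (g x / hs x) = αs + us x) ∧
      (∀ x ∈ T, π * g x + (1 - π) * h x = πs * g x + (1 - πs) * hs x) := by
  intro πs hπs
  obtain ⟨C, hC⟩ := hu_bdd
  have h_meas : Measurable h := by rw [funext hh_def]; fun_prop
  have h_pos : ∀ x ∈ T, 0 < h x := fun x hx =>
    hh_def x ▸ mul_pos (hg_pos x hx) (Real.exp_pos _)
  have log_ratio_ge : ∀ x ∈ T, α - C ≤ Real.log (g x / h x) := fun x hx => by
    rw [hh_def, log_div_mul_exp (hg_pos x hx).ne']
    linarith [(abs_le.1 (hC x hx)).1]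
  obtain ⟨αs, us, hs, tilt, mixture_eq⟩ := gaet_p_eq_one_not_identifiable_general
    hT_compact.measure_lt_top.ne hg_meas h_meas hg_pos h_pos hg_one hh_one log_ratio_ge hπ.2.le
    hπs.2
  exact ⟨αs, us, hs, tilt.measurable_component, tilt.bounded_component, tilt.centered_component,
    tilt.measurable, tilt.pos, tilt.integral_eq_one, tilt.log_ratio, fun x _ => mixture_eq x⟩
end

section
/- Let n ≥ 2 and let w_1, …, w_n be positive real numbers with min_i w_i < 1 < max_i w_i. Then there exists a unique real number λ such that 1 + λ(w_i − 1) > 0 for all i = 1, …, n and Σ_{i=1}^n (w_i − 1)/(1 + λ(w_i − 1)) = 0. Moreover, the function λ ↦ Σ_{i=1}^n (w_i − 1)/(1 + λ(w_i − 1)) is strictly decreasing on the open interval of λ for which all denominators 1 + λ(w_i − 1) are positive. -/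
/-!
With `a i = w i - 1`, the constraint function is the logarithmic derivative of the polynomial
`P l = ∏ i, (1 + l * a i)`. Since the `a i` take both signs, the `l` at which all factors of `P` are
nonnegative form a compact interval. At a maximizer of `P` on it, `P ≥ P 0 = 1`, so no factor
vanishes there: the maximizer lies in the interior and is a critical point of `P`, hence a zero of
the constraint function. Each summand of the constraint function is decreasing, which gives
uniqueness.
-/

namespace EmpiricalLikelihood

variable {ι : Type*}

section OrderedField

variable {𝕜 : Type*} [Field 𝕜] [LinearOrder 𝕜]

/-- The multipliers admissible for the constraint values `a`: the weights `1 / (1 + l * a i)` of the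
empirical likelihood, up to normalization, are defined and positive. -/
def feasibleSet (s : Finset ι) (a : ι → 𝕜) : Set 𝕜 :=
  {l | ∀ i ∈ s, 0 < 1 + l * a i}

/-- The relaxation of `feasibleSet` to weak inequalities, over which the dual likelihood
`∏ i ∈ s, (1 + l * a i)` is maximized. -/
def closedFeasibleSet (s : Finset ι) (a : ι → 𝕜) : Set 𝕜 :=
  {l | ∀ i ∈ s, 0 ≤ 1 + l * a i}

variable {s : Finset ι} {a : ι → 𝕜}

theorem feasibleSet_subset_closedFeasibleSet : feasibleSet s a ⊆ closedFeasibleSet s a :=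
  fun _ hl i hi ↦ (hl i hi).le

variable [IsStrictOrderedRing 𝕜]

theorem zero_mem_closedFeasibleSet : (0 : 𝕜) ∈ closedFeasibleSet s a :=
  fun _ _ ↦ by simp

theorem closedFeasibleSet_subset_Icc {i j : ι} (hi : i ∈ s) (hai : a i < 0)
    (hj : j ∈ s) (haj : 0 < a j) :
    closedFeasibleSet s a ⊆ Set.Icc (-1 / a j) (-1 / a i) := by
  intro l hl
  rw [Set.mem_Icc, div_le_iff₀ haj, le_div_iff_of_neg hai]
  exact ⟨neg_le_iff_add_nonneg'.2 (hl j hj), neg_le_iff_add_nonneg'.2 (hl i hi)⟩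

theorem mem_feasibleSet_of_isMaxOn_prod {l : 𝕜} (hl : l ∈ closedFeasibleSet s a)
    (hmax : IsMaxOn (fun x ↦ ∏ i ∈ s, (1 + x * a i)) (closedFeasibleSet s a) l) :
    l ∈ feasibleSet s a := by
  have one_le_prod : 1 ≤ ∏ i ∈ s, (1 + l * a i) := by
    simpa using hmax zero_mem_closedFeasibleSet
  have factor_ne_zero : ∀ i ∈ s, 1 + l * a i ≠ 0 :=
    Finset.prod_ne_zero_iff.1 (zero_lt_one.trans_le one_le_prod).ne'
  exact fun i hi ↦ (hl i hi).lt_of_ne' (factor_ne_zero i hi)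

theorem strictAntiOn_div_one_add_mul {c : 𝕜} (hc : c ≠ 0) :
    StrictAntiOn (fun l ↦ c / (1 + l * c)) {l | 0 < 1 + l * c} := by
  intro l hl m hm hlm
  rw [div_lt_div_iff₀ hm hl]
  have hsq : l * c ^ 2 < m * c ^ 2 := by gcongr
  linear_combination hsq

theorem antitoneOn_div_one_add_mul (c : 𝕜) :
    AntitoneOn (fun l ↦ c / (1 + l * c)) {l | 0 < 1 + l * c} := by
  obtain rfl | hc := eq_or_ne c 0
  · simp [AntitoneOn]
  · exact (strictAntiOn_div_one_add_mul hc).antitoneOn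

theorem strictAntiOn_sum_div_one_add_mul (ha : ∃ i ∈ s, a i ≠ 0) :
    StrictAntiOn (fun l ↦ ∑ i ∈ s, a i / (1 + l * a i)) (feasibleSet s a) := by
  intro l hl m hm hlm
  obtain ⟨i, hi, hai⟩ := ha
  exact Finset.sum_lt_sum
    (fun j hj ↦ antitoneOn_div_one_add_mul (a j) (hl j hj) (hm j hj) hlm.le)
    ⟨i, hi, strictAntiOn_div_one_add_mul hai (hl i hi) (hm i hi) hlm⟩

variable [TopologicalSpace 𝕜] [OrderTopology 𝕜]

theorem isOpen_feasibleSet : IsOpen (feasibleSet s a) := by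
  simp only [feasibleSet, Set.ofPred_forall]
  exact isOpen_biInter_finset fun i _ ↦ isOpen_lt continuous_const (by fun_prop)

theorem isClosed_closedFeasibleSet : IsClosed (closedFeasibleSet s a) := by
  simp only [closedFeasibleSet, Set.ofPred_forall]
  exact isClosed_biInter fun i _ ↦ isClosed_le continuous_const (by fun_prop)

end OrderedField

theorem logDeriv_prod_one_add_mul {𝕜 : Type*} [NontriviallyNormedField 𝕜] {s : Finset ι}
    {a : ι → 𝕜} {l : 𝕜} (hl : ∀ i ∈ s, 1 + l * a i ≠ 0) :
    logDeriv (fun x ↦ ∏ i ∈ s, (1 + x * a i)) l = ∑ i ∈ s, a i / (1 + l * a i) := by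
  rw [logDeriv_prod (f := fun i x ↦ 1 + x * a i) hl fun i _ ↦ by fun_prop]
  simp [logDeriv_apply]

section Real

variable {s : Finset ι} {a : ι → ℝ}

theorem isCompact_closedFeasibleSet (hneg : ∃ i ∈ s, a i < 0) (hpos : ∃ i ∈ s, 0 < a i) :
    IsCompact (closedFeasibleSet s a) := by
  obtain ⟨i, hi, hai⟩ := hneg
  obtain ⟨j, hj, haj⟩ := hpos
  exact isCompact_Icc.of_isClosed_subset isClosed_closedFeasibleSet
    (closedFeasibleSet_subset_Icc hi hai hj haj)

theorem sum_div_one_add_mul_eq_zero_of_isMaxOn_prod {l : ℝ} (hl : l ∈ feasibleSet s a)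
    (hmax : IsMaxOn (fun x ↦ ∏ i ∈ s, (1 + x * a i)) (feasibleSet s a) l) :
    ∑ i ∈ s, a i / (1 + l * a i) = 0 := by
  have hderiv : deriv (fun x ↦ ∏ i ∈ s, (1 + x * a i)) l = 0 :=
    (hmax.isLocalMax (isOpen_feasibleSet.mem_nhds hl)).deriv_eq_zero
  rw [← logDeriv_prod_one_add_mul fun i hi ↦ (hl i hi).ne', logDeriv_apply, hderiv, zero_div]

theorem exists_mem_feasibleSet_sum_div_one_add_mul_eq_zero
    (hneg : ∃ i ∈ s, a i < 0) (hpos : ∃ i ∈ s, 0 < a i) :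
    ∃ l ∈ feasibleSet s a, ∑ i ∈ s, a i / (1 + l * a i) = 0 := by
  obtain ⟨l, hl, hmax⟩ := (isCompact_closedFeasibleSet hneg hpos).exists_isMaxOn
    ⟨0, zero_mem_closedFeasibleSet⟩
    (f := fun x ↦ ∏ i ∈ s, (1 + x * a i)) (by fun_prop)
  have hl' : l ∈ feasibleSet s a := mem_feasibleSet_of_isMaxOn_prod hl hmax
  exact ⟨l, hl', sum_div_one_add_mul_eq_zero_of_isMaxOn_prod hl'
    (hmax.on_subset feasibleSet_subset_closedFeasibleSet)⟩

end Real

end EmpiricalLikelihood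

open EmpiricalLikelihood in
theorem el_lagrange_multiplier_exists_unique_general {ι : Type*} {s : Finset ι} {a : ι → ℝ}
    (hneg : ∃ i ∈ s, a i < 0) (hpos : ∃ i ∈ s, 0 < a i) :
    (∃! l : ℝ, (∀ i ∈ s, 0 < 1 + l * a i) ∧ ∑ i ∈ s, a i / (1 + l * a i) = 0) ∧
    StrictAntiOn (fun l : ℝ ↦ ∑ i ∈ s, a i / (1 + l * a i))
      {l : ℝ | ∀ i ∈ s, 0 < 1 + l * a i} := by
  have hanti : StrictAntiOn (fun l ↦ ∑ i ∈ s, a i / (1 + l * a i)) (feasibleSet s a) :=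
    strictAntiOn_sum_div_one_add_mul (hpos.imp fun _ ⟨hi, hai⟩ ↦ ⟨hi, hai.ne'⟩)
  obtain ⟨l, hl, hl_zero⟩ := exists_mem_feasibleSet_sum_div_one_add_mul_eq_zero hneg hpos
  refine ⟨⟨l, ⟨hl, hl_zero⟩, ?_⟩, hanti⟩
  rintro m ⟨hm, hm_zero⟩
  exact hanti.injOn hm hl (hm_zero.trans hl_zero.symm)

/-- Existence and uniqueness of the empirical-likelihood Lagrange multiplier:
if the positive values `w_1, …, w_n` satisfy `min w_i < 1 < max w_i`, there is a
unique `λ` with all denominators `1 + λ(w_i − 1)` positive solving the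
constraint equation; moreover the constraint function is strictly decreasing
on the set of `λ` with all denominators positive. -/
theorem el_lagrange_multiplier_exists_unique
    (n : ℕ) (hn : 2 ≤ n) (w : ℕ → ℝ)
    (hw_pos : ∀ i ∈ Finset.range n, 0 < w i)
    (hmin : ∃ i ∈ Finset.range n, w i < 1)
    (hmax : ∃ i ∈ Finset.range n, 1 < w i) :
    (∃! l : ℝ, (∀ i ∈ Finset.range n, 0 < 1 + l * (w i - 1)) ∧
      ∑ i ∈ Finset.range n, (w i - 1) / (1 + l * (w i - 1)) = 0) ∧
    StrictAntiOn (fun l : ℝ => ∑ i ∈ Finset.range n, (w i - 1) / (1 + l * (w i - 1)))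
      {l : ℝ | ∀ i ∈ Finset.range n, 0 < 1 + l * (w i - 1)} := by
  exact el_lagrange_multiplier_exists_unique_general (a := fun i ↦ w i - 1)
    (by simpa only [sub_neg] using hmin) (by simpa only [sub_pos] using hmax)
end

section
/- Let n ≥ 2 and let w_1, …, w_n be positive real numbers with min_i w_i < 1 < max_i w_i. Let λ* be the unique real number satisfying 1 + λ*(w_i − 1) > 0 for all i and Σ_{i=1}^n (w_i − 1)/(1 + λ*(w_i − 1)) = 0, and set p*_i = n^{-1}·(1 + λ*(w_i − 1))^{-1} for i = 1, …, n. Then p*_i > 0 for all i, Σ_{i=1}^n p*_i = 1, Σ_{i=1}^n p*_i w_i = 1, and for every vector (p_1, …, p_n) with p_i > 0 for all i, Σ_{i=1}^n p_i = 1, and Σ_{i=1}^n p_i w_i = 1, one has Σ_{i=1}^n log p_i ≤ Σ_{i=1}^n log p*_i, with equality if and only if p_i = p*_i for all i. -/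
/-!
For positive weights, `log (q i) - log (p i) = log (q i / p i) ≤ q i / p i - 1`, with equality only
at `q i = p i`, so `p` beats every `q` whose ratios `q i / p i` sum to at most the number of
indices. The ratio of a feasible `q` to the Lagrange weights is affine in the constraint functions,
`q i / p i = #s * (q i + l (q i • g i))`, and the two constraints on `q` make these sum to `#s`.
-/

open Finset

section LogSums

variable {ι : Type*} {s : Finset ι} {p q x : ι → ℝ}

lemma log_eq_sub_one_iff {a : ℝ} (ha : 0 < a) : Real.log a = a - 1 ↔ a = 1 := by
  refine ⟨fun h => ?_, fun h => by simp [h]⟩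
  by_contra hne
  exact (Real.log_lt_sub_one_of_pos ha hne).ne h

lemma sum_log_le_sum_sub_card (hx : ∀ i ∈ s, 0 < x i) :
    ∑ i ∈ s, Real.log (x i) ≤ ∑ i ∈ s, x i - #s := by
  calc ∑ i ∈ s, Real.log (x i)
      ≤ ∑ i ∈ s, (x i - 1) := sum_le_sum fun i hi => Real.log_le_sub_one_of_pos (hx i hi)
    _ = ∑ i ∈ s, x i - #s := by simp

lemma sum_log_eq_sum_sub_card_iff (hx : ∀ i ∈ s, 0 < x i) :
    ∑ i ∈ s, Real.log (x i) = ∑ i ∈ s, x i - #s ↔ ∀ i ∈ s, x i = 1 := by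
  have sum_sub_one : ∑ i ∈ s, (x i - 1) = ∑ i ∈ s, x i - #s := by simp
  rw [← sum_sub_one,
    sum_eq_sum_iff_of_le fun i hi => Real.log_le_sub_one_of_pos (hx i hi)]
  exact forall₂_congr fun i hi => log_eq_sub_one_iff (hx i hi)

lemma sum_log_div (hq : ∀ i ∈ s, 0 < q i) (hp : ∀ i ∈ s, 0 < p i) :
    ∑ i ∈ s, Real.log (q i / p i) = ∑ i ∈ s, Real.log (q i) - ∑ i ∈ s, Real.log (p i) := by
  rw [← sum_sub_distrib]
  exact sum_congr rfl fun i hi => Real.log_div (hq i hi).ne' (hp i hi).ne'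

theorem sum_log_le_sum_log_of_sum_div_le_card (hq : ∀ i ∈ s, 0 < q i) (hp : ∀ i ∈ s, 0 < p i)
    (hqp : ∑ i ∈ s, q i / p i ≤ #s) :
    ∑ i ∈ s, Real.log (q i) ≤ ∑ i ∈ s, Real.log (p i) := by
  have h := sum_log_le_sum_sub_card fun i hi => div_pos (hq i hi) (hp i hi)
  rw [sum_log_div hq hp] at h
  linarith

theorem sum_log_eq_sum_log_iff_of_sum_div_le_card (hq : ∀ i ∈ s, 0 < q i)
    (hp : ∀ i ∈ s, 0 < p i) (hqp : ∑ i ∈ s, q i / p i ≤ #s) :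
    ∑ i ∈ s, Real.log (q i) = ∑ i ∈ s, Real.log (p i) ↔ ∀ i ∈ s, q i = p i := by
  refine ⟨fun h => ?_, fun h => sum_congr rfl fun i hi => by rw [h i hi]⟩
  have hratio : ∀ i ∈ s, 0 < q i / p i := fun i hi => div_pos (hq i hi) (hp i hi)
  have hle := sum_log_le_sum_sub_card hratio
  have heq : ∑ i ∈ s, Real.log (q i / p i) = ∑ i ∈ s, q i / p i - #s := by
    rw [sum_log_div hq hp] at hle ⊢
    linarith
  intro i hi
  exact (div_eq_one_iff_eq (hp i hi).ne').1 ((sum_log_eq_sum_sub_card_iff hratio).1 heq i hi)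

end LogSums

lemma sum_smul_sub_eq_zero_iff {ι R E : Type*} [Ring R] [AddCommGroup E] [Module R E]
    {s : Finset ι} {p : ι → R} (hp : ∑ i ∈ s, p i = 1) (w : ι → E) (c : E) :
    ∑ i ∈ s, p i • (w i - c) = 0 ↔ ∑ i ∈ s, p i • w i = c := by
  simp only [smul_sub, sum_sub_distrib, ← sum_smul, hp, one_smul, sub_eq_zero]

lemma sum_mul_one_add_linearMap {ι R E : Type*} [Semiring R] [AddCommMonoid E] [Module R E]
    (s : Finset ι) (q : ι → R) (g : ι → E) (l : E →ₗ[R] R) :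
    ∑ i ∈ s, q i * (1 + l (g i)) = ∑ i ∈ s, q i + l (∑ i ∈ s, q i • g i) := by
  simp only [mul_add, mul_one, sum_add_distrib, map_sum, map_smul, smul_eq_mul]

section ELWeight

variable {ι E : Type*} [AddCommGroup E] [Module ℝ E] {s : Finset ι} {g : ι → E} {l : E →ₗ[ℝ] ℝ}

/-- The empirical-likelihood weights on `s` for the moment constraint `∑ i ∈ s, p i • g i = 0`.
The Lagrange multiplier `l` is a linear functional, so that `E` needs no inner product; a scalar
constraint corresponds to `E = ℝ` with `l` a multiplication map. -/
noncomputable def elWeight (s : Finset ι) (g : ι → E) (l : E →ₗ[ℝ] ℝ) (i : ι) : ℝ :=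
  (#s : ℝ)⁻¹ * (1 + l (g i))⁻¹

lemma elWeight_pos {i : ι} (hi : i ∈ s) (hl : 0 < 1 + l (g i)) : 0 < elWeight s g l i := by
  have hs : 0 < #s := card_pos.2 ⟨i, hi⟩
  unfold elWeight
  positivity

lemma sum_elWeight_smul (hg : ∑ i ∈ s, (1 + l (g i))⁻¹ • g i = 0) :
    ∑ i ∈ s, elWeight s g l i • g i = 0 := by
  simp only [elWeight, mul_smul, ← smul_sum, hg, smul_zero]

lemma sum_elWeight (hs : s.Nonempty) (hl : ∀ i ∈ s, 1 + l (g i) ≠ 0)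
    (hg : ∑ i ∈ s, (1 + l (g i))⁻¹ • g i = 0) : ∑ i ∈ s, elWeight s g l i = 1 := by
  have hcard : (#s : ℝ) ≠ 0 := Nat.cast_ne_zero.2 hs.card_ne_zero
  calc ∑ i ∈ s, elWeight s g l i
      = ∑ i ∈ s, elWeight s g l i * (1 + l (g i)) := by
        rw [sum_mul_one_add_linearMap, sum_elWeight_smul hg, map_zero, add_zero]
    _ = ∑ _i ∈ s, (#s : ℝ)⁻¹ := sum_congr rfl fun i hi => inv_mul_cancel_right₀ (hl i hi) _
    _ = 1 := by rw [sum_const, nsmul_eq_mul, mul_inv_cancel₀ hcard]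

lemma sum_div_elWeight {q : ι → ℝ} (hq : ∑ i ∈ s, q i = 1) (hqg : ∑ i ∈ s, q i • g i = 0) :
    ∑ i ∈ s, q i / elWeight s g l i = #s := by
  have ratio (i : ι) : q i / elWeight s g l i = #s * (q i * (1 + l (g i))) := by
    rw [elWeight, ← mul_inv, div_inv_eq_mul, mul_left_comm]
  simp only [ratio, ← mul_sum, sum_mul_one_add_linearMap, hq, hqg, map_zero, add_zero, mul_one]

theorem el_weights_maximize_general (hs : s.Nonempty) (w : ι → E) (c : E)
    (hl_pos : ∀ i ∈ s, 0 < 1 + l (w i - c))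
    (hl_eq : ∑ i ∈ s, (1 + l (w i - c))⁻¹ • (w i - c) = 0)
    (p : ι → ℝ) (hp : ∀ i ∈ s, p i = elWeight s (w · - c) l i) :
    (∀ i ∈ s, 0 < p i) ∧
    (∑ i ∈ s, p i = 1) ∧
    (∑ i ∈ s, p i • w i = c) ∧
    (∀ q : ι → ℝ, (∀ i ∈ s, 0 < q i) → (∑ i ∈ s, q i = 1) → (∑ i ∈ s, q i • w i = c) →
      (∑ i ∈ s, Real.log (q i) ≤ ∑ i ∈ s, Real.log (p i)) ∧
      ((∑ i ∈ s, Real.log (q i) = ∑ i ∈ s, Real.log (p i)) ↔ ∀ i ∈ s, q i = p i)) := by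
  have p_pos : ∀ i ∈ s, 0 < p i := fun i hi => hp i hi ▸ elWeight_pos hi (hl_pos i hi)
  have sum_p : ∑ i ∈ s, p i = 1 :=
    (sum_congr rfl hp).trans (sum_elWeight hs (fun i hi => (hl_pos i hi).ne') hl_eq)
  have sum_p_smul : ∑ i ∈ s, p i • (w i - c) = 0 :=
    (sum_congr rfl fun i hi => by rw [hp i hi]).trans (sum_elWeight_smul hl_eq)
  refine ⟨p_pos, sum_p, (sum_smul_sub_eq_zero_iff sum_p w c).1 sum_p_smul,
    fun q q_pos sum_q sum_q_smul => ?_⟩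
  have sum_ratio : ∑ i ∈ s, q i / p i = #s :=
    (sum_congr rfl fun i hi => by rw [hp i hi]).trans
      (sum_div_elWeight sum_q ((sum_smul_sub_eq_zero_iff sum_q w c).2 sum_q_smul))
  exact ⟨sum_log_le_sum_log_of_sum_div_le_card q_pos p_pos sum_ratio.le,
    sum_log_eq_sum_log_iff_of_sum_div_le_card q_pos p_pos sum_ratio.le⟩

end ELWeight

/-- The empirical-likelihood weights `p*_i = n⁻¹ (1 + λ*(w_i − 1))⁻¹` built from
the Lagrange multiplier `λ*` are feasible (positive, summing to one, and
satisfying the normalization `Σ p*_i w_i = 1`) and uniquely maximize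
`Σ log p_i` over the feasible set. -/
theorem el_weights_maximize
    (n : ℕ) (hn : 2 ≤ n) (w : ℕ → ℝ)
    (hw_pos : ∀ i ∈ Finset.range n, 0 < w i)
    (hmin : ∃ i ∈ Finset.range n, w i < 1)
    (hmax : ∃ i ∈ Finset.range n, 1 < w i)
    (l : ℝ)
    (hl_pos : ∀ i ∈ Finset.range n, 0 < 1 + l * (w i - 1))
    (hl_eq : ∑ i ∈ Finset.range n, (w i - 1) / (1 + l * (w i - 1)) = 0)
    (ps : ℕ → ℝ)
    (hps_def : ∀ i ∈ Finset.range n, ps i = (n : ℝ)⁻¹ * (1 + l * (w i - 1))⁻¹) :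
    (∀ i ∈ Finset.range n, 0 < ps i) ∧
    (∑ i ∈ Finset.range n, ps i = 1) ∧
    (∑ i ∈ Finset.range n, ps i * w i = 1) ∧
    (∀ q : ℕ → ℝ, (∀ i ∈ Finset.range n, 0 < q i) →
      (∑ i ∈ Finset.range n, q i = 1) → (∑ i ∈ Finset.range n, q i * w i = 1) →
      (∑ i ∈ Finset.range n, Real.log (q i) ≤ ∑ i ∈ Finset.range n, Real.log (ps i)) ∧
      ((∑ i ∈ Finset.range n, Real.log (q i) = ∑ i ∈ Finset.range n, Real.log (ps i)) ↔
        ∀ i ∈ Finset.range n, q i = ps i)) := by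
  simpa using el_weights_maximize_general (l := LinearMap.mulLeft ℝ l)
    (nonempty_range_iff.2 (by lia)) w 1 (by simpa using hl_pos)
    (by simpa [div_eq_inv_mul] using hl_eq) ps (by simpa [elWeight] using hps_def)
end

section
/- Let n_0, n_1 ≥ 1 be integers, n = n_0 + n_1, π ∈ (0,1), α ∈ ℝ, and η_1, …, η_n ∈ ℝ. Set w_i = exp(α + η_i), λ̃ = (n_0 + n_1 π)/n, τ = log((1−π)/π), and E_i = exp(α + η_i − τ). Then 1 + λ̃(w_i − 1) > 0 for every i, and −Σ_{i=1}^n log(1 + λ̃(w_i − 1)) + Σ_{i=1}^{n_0} log w_i + Σ_{i=n_0+1}^n log(π w_i + 1 − π) = ℓ_n(π, α, η) + n_0·log(n/n_0) + n_1·log(n/n_1), where ℓ_n(π, α, η) = Σ_{i=1}^{n_0} log[n_0 E_i / (n_1 π + (n_0 + n_1 π) E_i)] + Σ_{i=n_0+1}^{n} log[(n_1 π + n_1 π E_i)/(n_1 π + (n_0 + n_1 π) E_i)]. -/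
/-!
Relative to the base density, a labelled point has density ratio `w`, an unlabelled one
`u = p w + 1 - p` with `p = π`, and a point of the pooled sample the weighted average
`(n₀ w + n₁ u) / n`. The multiplier `λ̃` is the one for which `1 + λ̃ (w - 1)` is this average,
which is clearly positive. On the other side, `E` is the posterior odds `p w / (1 - p)`, so Bayes'
rule turns the summands of `ℓ_n` into the logarithms of the class probabilities
`n₀ w / (n₀ w + n₁ u)` and `n₁ u / (n₀ w + n₁ u)`. Dividing these by the prior class frequencies
`n₀ / n` and `n₁ / n` leaves the summands of the empirical log-likelihood.
-/

section Field

variable {K : Type*} [Field K] {a b p w : K}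

theorem one_add_div_mul_sub_one_eq_pooled (hab : a + b ≠ 0) :
    1 + (a + b * p) / (a + b) * (w - 1) = (a * w + b * (p * w + 1 - p)) / (a + b) := by
  field_simp
  ring

theorem add_mul_odds_eq_odds_mul_pooled (hp : 1 - p ≠ 0) :
    b * p + (a + b * p) * (p / (1 - p) * w)
      = p / (1 - p) * (a * w + b * (p * w + 1 - p)) := by
  field_simp
  ring

theorem mul_odds_div_eq_div_pooled (hp₀ : p ≠ 0) (hp₁ : 1 - p ≠ 0) :
    a * (p / (1 - p) * w) / (b * p + (a + b * p) * (p / (1 - p) * w))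
      = a * w / (a * w + b * (p * w + 1 - p)) := by
  rw [add_mul_odds_eq_odds_mul_pooled hp₁, mul_left_comm,
    mul_div_mul_left _ _ (div_ne_zero hp₀ hp₁)]

theorem add_mul_odds_div_eq_mixture_div_pooled (hp₀ : p ≠ 0) (hp₁ : 1 - p ≠ 0) :
    (b * p + b * p * (p / (1 - p) * w)) / (b * p + (a + b * p) * (p / (1 - p) * w))
      = b * (p * w + 1 - p) / (a * w + b * (p * w + 1 - p)) := by
  have numerator_eq : b * p + b * p * (p / (1 - p) * w)
      = p / (1 - p) * (b * (p * w + 1 - p)) := by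
    field_simp
    ring
  rw [numerator_eq, add_mul_odds_eq_odds_mul_pooled hp₁,
    mul_div_mul_left _ _ (div_ne_zero hp₀ hp₁)]

end Field

theorem exp_sub_log_eq_inv_mul {y : ℝ} (hy : 0 < y) (x : ℝ) :
    Real.exp (x - Real.log y) = y⁻¹ * Real.exp x := by
  rw [Real.exp_sub, Real.exp_log hy, div_eq_inv_mul]

theorem mul_add_one_sub_pos {p w : ℝ} (hp : p ∈ Set.Icc (0 : ℝ) 1) (hw : 0 < w) :
    0 < p * w + 1 - p :=
  calc
    0 < 1 + p * (w - 1) := (convex_Ioi (0 : ℝ)).add_smul_sub_mem (Set.mem_Ioi.2 one_pos) hw hp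
    _ = p * w + 1 - p := by ring

theorem log_mul_div_eq_sub {a c u v : ℝ} (ha : a ≠ 0) (hc : c ≠ 0) (hu : u ≠ 0) (hv : v ≠ 0) :
    Real.log (a * u / v) = Real.log u - Real.log (v / c) - Real.log (c / a) := by
  rw [Real.log_div (mul_ne_zero ha hu) hv, Real.log_mul ha hu, Real.log_div hv hc,
    Real.log_div hc ha]
  ring

theorem sum_log_mul_div_eq_sub {ι : Type*} {s : Finset ι} {a c : ℝ} {u v : ι → ℝ}
    (ha : a ≠ 0) (hc : c ≠ 0) (hu : ∀ i ∈ s, u i ≠ 0) (hv : ∀ i ∈ s, v i ≠ 0) :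
    ∑ i ∈ s, Real.log (a * u i / v i)
      = ∑ i ∈ s, Real.log (u i) - ∑ i ∈ s, Real.log (v i / c) - s.card * Real.log (c / a) := by
  rw [Finset.sum_congr rfl fun i hi => log_mul_div_eq_sub ha hc (hu i hi) (hv i hi)]
  simp only [Finset.sum_sub_distrib, Finset.sum_const, nsmul_eq_mul]

/-- Substituting the maximizing Lagrange multiplier `λ̃ = (n₀ + n₁π)/n` into the
empirical log-likelihood yields the profile log-likelihood `ℓ_n(π, α, η)` up to
the constant `n₀ log(n/n₀) + n₁ log(n/n₁)`; moreover all the quantities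
`1 + λ̃(w_i − 1)` are positive. -/
theorem el_profile_loglik_identity
    (n0 n1 : ℕ) (hn0 : 1 ≤ n0) (hn1 : 1 ≤ n1) (n : ℕ) (hn : n = n0 + n1)
    (pi0 : ℝ) (hpi : pi0 ∈ Set.Ioo (0:ℝ) 1) (α : ℝ) (η : ℕ → ℝ)
    (w : ℕ → ℝ) (hw : ∀ i, w i = Real.exp (α + η i))
    (lam : ℝ) (hlam : lam = ((n0 : ℝ) + (n1 : ℝ) * pi0) / (n : ℝ))
    (τ : ℝ) (hτ : τ = Real.log ((1 - pi0) / pi0))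
    (E : ℕ → ℝ) (hE : ∀ i, E i = Real.exp (α + η i - τ)) :
    (∀ i, 0 < 1 + lam * (w i - 1)) ∧
    (- ∑ i ∈ Finset.range n, Real.log (1 + lam * (w i - 1))
      + ∑ i ∈ Finset.range n0, Real.log (w i)
      + ∑ i ∈ Finset.Ico n0 n, Real.log (pi0 * w i + 1 - pi0)
      = (∑ i ∈ Finset.range n0,
          Real.log ((n0 : ℝ) * E i / ((n1 : ℝ) * pi0 + ((n0 : ℝ) + (n1 : ℝ) * pi0) * E i))
        + ∑ i ∈ Finset.Ico n0 n,
          Real.log (((n1 : ℝ) * pi0 + (n1 : ℝ) * pi0 * E i)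
            / ((n1 : ℝ) * pi0 + ((n0 : ℝ) + (n1 : ℝ) * pi0) * E i)))
        + (n0 : ℝ) * Real.log ((n : ℝ) / (n0 : ℝ))
        + (n1 : ℝ) * Real.log ((n : ℝ) / (n1 : ℝ))) := by
  have hn0' : (0 : ℝ) < n0 := mod_cast hn0
  have hn1' : (0 : ℝ) < n1 := mod_cast hn1
  have n_eq : (n : ℝ) = n0 + n1 := mod_cast hn
  have n_pos : (0 : ℝ) < n := n_eq ▸ add_pos hn0' hn1'
  have w_pos (i) : 0 < w i := hw i ▸ Real.exp_pos _
  have u_pos (i) : 0 < pi0 * w i + 1 - pi0 :=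
    mul_add_one_sub_pos (Set.Ioo_subset_Icc_self hpi) (w_pos i)
  have pooled_pos (i) : 0 < n0 * w i + n1 * (pi0 * w i + 1 - pi0) :=
    add_pos (mul_pos hn0' (w_pos i)) (mul_pos hn1' (u_pos i))
  have pooled_eq (i) : 1 + lam * (w i - 1) = (n0 * w i + n1 * (pi0 * w i + 1 - pi0)) / n := by
    rw [hlam, n_eq, one_add_div_mul_sub_one_eq_pooled (n_eq ▸ n_pos.ne')]
  have E_eq (i) : E i = pi0 / (1 - pi0) * w i := by
    rw [hE, hw, hτ, exp_sub_log_eq_inv_mul (div_pos (sub_pos.2 hpi.2) hpi.1), inv_div]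
  refine ⟨fun i => pooled_eq i ▸ div_pos (pooled_pos i) n_pos, ?_⟩
  simp_rw [pooled_eq, E_eq, mul_odds_div_eq_div_pooled hpi.1.ne' (sub_pos.2 hpi.2).ne',
    add_mul_odds_div_eq_mixture_div_pooled hpi.1.ne' (sub_pos.2 hpi.2).ne']
  rw [sum_log_mul_div_eq_sub hn0'.ne' n_pos.ne' (fun i _ => (w_pos i).ne')
      (fun i _ => (pooled_pos i).ne'),
    sum_log_mul_div_eq_sub hn1'.ne' n_pos.ne' (fun i _ => (u_pos i).ne')
      (fun i _ => (pooled_pos i).ne'),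
    ← Finset.sum_range_add_sum_Ico _ (hn ▸ Nat.le_add_right n0 n1 : n0 ≤ n),
    Finset.card_range, Nat.card_Ico, hn, Nat.add_sub_cancel_left]
  ring
end
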